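/- For any integer k ≥ 2 and any outerplanar simple graph G with maximum degree Δ(G) ≥ 3, we have χ_k(G) ≤ ch_k(G) ≤ ⌊(Δ(G) − 1)/k⌋ + 3. -/

import Mathlib

open SimpleGraph

/-- A drawing of a simple graph in the plane: vertices are mapped to distinct points,
edges to arcs (injective continuous curves parametrised on `[0,1]`) joining the images of
their endpoints, whose interiors avoid the vertex points and each other. -/
structure PlaneEmbedding {V : Type*} (G : SimpleGraph V) where
  pos : V → ℝ × ℝ
  inj : Function.Injective pos
  arc : G.edgeSet → ℝ → ℝ × ℝ
  arc_cont : ∀ e, ContinuousOn (arc e) (Set.Icc 0 1)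
  arc_inj : ∀ e, Set.InjOn (arc e) (Set.Icc 0 1)
  arc_ends : ∀ e : G.edgeSet, ∃ u v : V, (e : Sym2 V) = s(u, v) ∧
      arc e 0 = pos u ∧ arc e 1 = pos v
  arc_avoid : ∀ e : G.edgeSet, ∀ t ∈ Set.Ioo (0:ℝ) 1, arc e t ∉ Set.range pos
  arc_disjoint : ∀ e f : G.edgeSet, e ≠ f → ∀ s ∈ Set.Ioo (0:ℝ) 1, ∀ t ∈ Set.Ioo (0:ℝ) 1,
      arc e s ≠ arc f t

/-- A graph is planar if it admits a drawing in the plane. -/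
def SimpleGraph.IsPlanar {V : Type*} (G : SimpleGraph V) : Prop :=
  Nonempty (PlaneEmbedding G)

/-- A graph is outerplanar if it admits a plane drawing with all vertices on the unit
circle and all edges inside the closed unit disk. -/
def SimpleGraph.IsOuterplanar {V : Type*} (G : SimpleGraph V) : Prop :=
  ∃ emb : PlaneEmbedding G, (∀ v, ‖emb.pos v‖ = 1) ∧
    ∀ e, ∀ t ∈ Set.Icc (0:ℝ) 1, ‖emb.arc e t‖ ≤ 1

/-- A `k`-frugal colouring: a proper vertex colouring in which no colour appears more than
`k` times in the neighbourhood of any vertex. -/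
def SimpleGraph.IsFrugalColoring {V α : Type*} (G : SimpleGraph V) (k : ℕ) (c : V → α) : Prop :=
  (∀ u v, G.Adj u v → c u ≠ c v) ∧
  ∀ (v : V) (a : α), {u | u ∈ G.neighborSet v ∧ c u = a}.ncard ≤ k

/-- The `k`-frugal chromatic number `χ_k(G)`: the least number of colours in a `k`-frugal
colouring of `G`. -/
noncomputable def SimpleGraph.frugalChromaticNumber {V : Type*} (G : SimpleGraph V) (k : ℕ) : ℕ :=
  sInf {n : ℕ | ∃ c : V → ℕ, (∀ v, c v < n) ∧ G.IsFrugalColoring k c}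

/-- The `k`-frugal choice number `ch_k(G)`: the least `t` such that any assignment of lists
of `t` integers to the vertices admits a `k`-frugal colouring from the lists. -/
noncomputable def SimpleGraph.frugalChoiceNumber {V : Type*} (G : SimpleGraph V) (k : ℕ) : ℕ :=
  sInf {t : ℕ | ∀ L : V → Finset ℤ, (∀ v, (L v).card = t) →
    ∃ c : V → ℤ, (∀ v, c v ∈ L v) ∧ G.IsFrugalColoring k c}

/-!
Cut open at a point, the circle orders the vertices of an outerplanar graph, and no two edges
interlace in this order. Indeed, let disjoint curves `p` and `q` in the disk join `a` to `c` and
`b` to `d`, where `a, b, c, d` lie on the circle in this order. A continuous argument of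
`p s - q t` on the parameter square changes along each side by an inscribed angle, and these four
changes do not sum to zero.

A shortest interval of the order that has at least two interior points and that no edge leaves from
its interior contains a vertex `u` with all its neighbours among two vertices `v` and `w`, such that
the neighbours of `v` other than `u` and `w` form a clique if `u` is adjacent to `v`. Given a frugal
colouring of `G - u` from lists of size `(D - 1) / k + 3`, the vertex `u` has to avoid the colours
of `v` and `w` and the at most `(D - 1) / k` colours that occur `k` times around `w`. Around `v` a
colour other than that of `w` occurs at most once because of the clique, so `u` may repeat it as
`k ≥ 2`. Infinite graphs follow by compactness.
-/

section Disk

open Complex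

lemma arg_one_sub_exp_mul_I {x : ℝ} (hx : x ∈ Set.Ioo 0 (2 * Real.pi)) :
    arg (1 - exp (x * I)) = (x - Real.pi) / 2 := by
  have hsin : 0 < 2 * Real.sin (x / 2) :=
    mul_pos two_pos (Real.sin_pos_of_pos_of_lt_pi (by linarith [hx.1]) (by linarith [hx.2]))
  have hpolar : 1 - exp (x * I) = (2 * Real.sin (x / 2) : ℝ) *
      (cos ((x - Real.pi) / 2 : ℝ) + sin ((x - Real.pi) / 2 : ℝ) * I) := by
    have hx2 : (x : ℂ) = 2 * (x / 2) := by ring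
    push_cast
    rw [sub_div, cos_sub_pi_div_two, sin_sub_pi_div_two, exp_mul_I, hx2, cos_two_mul, sin_two_mul,
      ← hx2]
    linear_combination -2 * cos_sq_add_sin_sq (x / 2 : ℂ)
  rw [hpolar, arg_mul_cos_add_sin_mul_I hsin]
  constructor <;> linarith [hx.1, hx.2, Real.pi_pos]

lemma one_sub_mem_slitPlane {z : ℂ} (hz : ‖z‖ ≤ 1) (hz1 : z ≠ 1) : 1 - z ∈ slitPlane := by
  rw [mem_slitPlane_iff]
  by_contra! ⟨hre, him⟩
  rw [sub_re, one_re] at hre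
  rw [sub_im, one_im] at him
  have := (re_le_norm z).trans hz
  exact hz1 (Complex.ext (by rw [one_re]; linarith) (by rw [one_im]; linarith))

lemma sub_eq_sub_of_exp_eq_mul_exp {X : Type*} [TopologicalSpace X] [PreconnectedSpace X]
    {f g : X → ℂ} (hf : Continuous f) (hg : Continuous g) {c : ℂ}
    (h : ∀ x, exp (f x) = c * exp (g x)) (x y : X) : f x - f y = g x - g y := by
  have hc : c ≠ 0 := left_ne_zero_of_mul (h x ▸ exp_ne_zero _)
  refine congrFun (isCoveringMap_exp.eq_of_comp_eq (g₁ := fun x => f x - f y)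
    (g₂ := fun x => g x - g y) (by fun_prop) (by fun_prop) (funext fun x => Subtype.ext ?_) y
    (by simp)) x
  change exp (f x - f y) = exp (g x - g y)
  rw [exp_sub, exp_sub, h, h, mul_div_mul_left _ _ hc]

-- The inscribed angle theorem: seen from a point of the unit circle, an arc appears under half
-- its central angle. As `c` is arbitrary, the same statement serves for `z t - exp (φ * I)`.
lemma im_sub_im_eq_of_exp_eq_mul_sub {X : Type*} [TopologicalSpace X] [PreconnectedSpace X]
    {f z : X → ℂ} (hf : Continuous f) (hz : Continuous z) (hz_le : ∀ t, ‖z t‖ ≤ 1) {c : ℂ}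
    {φ β δ : ℝ} (h : ∀ t, exp (f t) = c * (exp (φ * I) - z t)) {x y : X}
    (hx : z x = exp (β * I)) (hy : z y = exp (δ * I))
    (hβ : β - φ ∈ Set.Ioo 0 (2 * Real.pi)) (hδ : δ - φ ∈ Set.Ioo 0 (2 * Real.pi)) :
    (f y).im - (f x).im = (δ - β) / 2 := by
  let w : X → ℂ := fun t => exp ((-φ : ℝ) * I) * z t
  have hw : ∀ t, exp (φ * I) * (1 - w t) = exp (φ * I) - z t := fun t => by
    simp [w, mul_sub, ← mul_assoc, ← exp_add]
  have hw_le : ∀ t, ‖w t‖ ≤ 1 := fun t => by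
    simpa only [w, norm_mul, norm_exp_ofReal_mul_I, one_mul] using hz_le t
  have hw_ne : ∀ t, w t ≠ 1 := fun t ht => by
    exact exp_ne_zero (f t) (by rw [h, ← hw, ht, sub_self, mul_zero, mul_zero])
  have hslit : ∀ t, 1 - w t ∈ slitPlane := fun t => one_sub_mem_slitPlane (hw_le t) (hw_ne t)
  have hlog : Continuous fun t => log (1 - w t) := Continuous.clog (by fun_prop) hslit
  have harg : ∀ {t ψ}, z t = exp ((ψ : ℝ) * I) → ψ - φ ∈ Set.Ioo 0 (2 * Real.pi) →
      (log (1 - w t)).im = (ψ - φ - Real.pi) / 2 := fun {t ψ} ht hψ => by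
    rw [log_im, ← arg_one_sub_exp_mul_I hψ]
    simp only [w, ht, ← exp_add, ← add_mul, ← ofReal_add, neg_add_eq_sub]
  have hdiff := congrArg im (sub_eq_sub_of_exp_eq_mul_exp hf hlog (c := c * exp (φ * I))
    (fun t => by rw [exp_log (slitPlane_ne_zero (hslit t)), h, ← hw, mul_assoc]) y x)
  rw [sub_im, sub_im, harg hx hβ, harg hy hδ] at hdiff
  linarith

lemma exists_eq_of_interlacing_of_continuous {p q : ℝ → ℂ} (hp : Continuous p)
    (hq : Continuous q) (hp_le : ∀ t, ‖p t‖ ≤ 1) (hq_le : ∀ t, ‖q t‖ ≤ 1) {a b c d : ℝ}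
    (hpa : p 0 = exp (a * I)) (hqb : q 0 = exp (b * I)) (hpc : p 1 = exp (c * I))
    (hqd : q 1 = exp (d * I)) (hab : a < b) (hbc : b < c) (hcd : c < d)
    (hda : d < a + 2 * Real.pi) : ∃ s t, p s = q t := by
  by_contra! hne
  let F : C(ℝ × ℝ, ℂ) := ⟨fun x => p x.1 - q x.2, by fun_prop⟩
  have hF : ∀ x, F x ≠ 0 := fun x => sub_ne_zero.2 (hne _ _)
  obtain ⟨T, ⟨-, hT⟩, -⟩ := isCoveringMapOn_exp.existsUnique_continuousMap_lifts F
    (a₀ := (0, 0)) (e₀ := log (F (0, 0))) (exp_log (hF _)) hF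
  have hexp : ∀ s t, exp (T (s, t)) = p s - q t := fun s t => congrFun hT (s, t)
  have hshift : ∀ x : ℝ, exp ((x + 2 * Real.pi : ℝ) * I) = exp (x * I) := fun x => by
    rw [ofReal_add, add_mul, exp_add, ofReal_mul, ofReal_ofNat, exp_two_pi_mul_I, mul_one]
  have left := im_sub_im_eq_of_exp_eq_mul_sub (f := fun t => T (0, t)) (c := 1) (φ := a)
    (by fun_prop) hq hq_le (fun t => by rw [hexp, hpa, one_mul]) hqb hqd
    ⟨by linarith, by linarith⟩ ⟨by linarith, by linarith⟩
  have right := im_sub_im_eq_of_exp_eq_mul_sub (f := fun t => T (1, t)) (c := 1) (φ := c)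
    (by fun_prop) hq hq_le (fun t => by rw [hexp, hpc, one_mul]) (hqb.trans (hshift b).symm) hqd
    ⟨by linarith, by linarith⟩ ⟨by linarith, by linarith⟩
  have bottom := im_sub_im_eq_of_exp_eq_mul_sub (f := fun s => T (s, 0)) (c := -1) (φ := b)
    (by fun_prop) hp hp_le (fun s => by rw [hexp, hqb]; ring) (hpa.trans (hshift a).symm) hpc
    ⟨by linarith, by linarith⟩ ⟨by linarith, by linarith⟩
  have top := im_sub_im_eq_of_exp_eq_mul_sub (f := fun s => T (s, 1)) (c := -1) (φ := d)
    (by fun_prop) hp hp_le (fun s => by rw [hexp, hqd]; ring) (hpa.trans (hshift a).symm)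
    (hpc.trans (hshift c).symm) ⟨by linarith, by linarith⟩ ⟨by linarith, by linarith⟩
  linarith [Real.pi_pos]

lemma exists_eq_of_interlacing {p q : ℝ → ℂ} (hp : ContinuousOn p (Set.Icc 0 1))
    (hq : ContinuousOn q (Set.Icc 0 1))
    (hp_mem : Set.MapsTo p (Set.Icc 0 1) (Metric.closedBall 0 1))
    (hq_mem : Set.MapsTo q (Set.Icc 0 1) (Metric.closedBall 0 1)) {a b c d : ℝ}
    (hpa : p 0 = exp (a * I)) (hqb : q 0 = exp (b * I)) (hpc : p 1 = exp (c * I))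
    (hqd : q 1 = exp (d * I)) (hab : a < b) (hbc : b < c) (hcd : c < d)
    (hda : d < a + 2 * Real.pi) : ∃ s ∈ Set.Icc (0 : ℝ) 1, ∃ t ∈ Set.Icc (0 : ℝ) 1, p s = q t := by
  let proj : ℝ → ℝ := fun t => Set.projIcc (0 : ℝ) 1 zero_le_one t
  have hproj : Continuous proj := continuous_subtype_val.comp continuous_projIcc
  have hmem : ∀ t, proj t ∈ Set.Icc (0 : ℝ) 1 := fun t => (Set.projIcc (0 : ℝ) 1 zero_le_one t).2
  have hproj0 : proj 0 = 0 := by simp [proj]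
  have hproj1 : proj 1 = 1 := by simp [proj]
  obtain ⟨s, t, h⟩ := exists_eq_of_interlacing_of_continuous
    (hp.comp_continuous hproj hmem) (hq.comp_continuous hproj hmem)
    (fun t => mem_closedBall_zero_iff.1 (hp_mem (hmem t)))
    (fun t => mem_closedBall_zero_iff.1 (hq_mem (hmem t)))
    (by simpa [hproj0]) (by simpa [hproj0]) (by simpa [hproj1]) (by simpa [hproj1]) hab hbc hcd hda
  exact ⟨proj s, hmem s, proj t, hmem t, h⟩

end Disk

lemma exists_homeomorph_image_closedBall_image_sphere {E F : Type*} [NormedAddCommGroup E]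
    [NormedSpace ℝ E] [NormedAddCommGroup F] [NormedSpace ℝ F] (e : E ≃L[ℝ] F) :
    ∃ h : E ≃ₜ F, h '' Metric.closedBall 0 1 = Metric.closedBall 0 1 ∧
      h '' Metric.sphere 0 1 = Metric.sphere 0 1 := by
  have himage : ∀ s, e.toHomeomorph '' s = e '' s := fun _ => rfl
  have hinterior : interior (e '' Metric.closedBall 0 1) = e '' Metric.ball 0 1 := by
    rw [← himage, ← e.toHomeomorph.image_interior, interior_closedBall _ one_ne_zero, himage]
  obtain ⟨h, -, hclosure, hfrontier⟩ :=
    exists_homeomorph_image_interior_closure_frontier_eq_unitBall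
      (s := e '' Metric.closedBall 0 1)
      ((convex_closedBall _ _).is_linear_image e.toLinearMap.isLinear)
      (hinterior ▸ ⟨e 0, 0, Metric.mem_ball_self one_pos, rfl⟩)
      (e.lipschitz.isBounded_image Metric.isBounded_closedBall)
  refine ⟨e.toHomeomorph.trans h, ?_, ?_⟩
  · rw [← hclosure, ← himage, ← e.toHomeomorph.image_closure, Metric.isClosed_closedBall.closure_eq]
    exact Set.image_comp h e.toHomeomorph _
  · rw [← hfrontier, ← himage, ← e.toHomeomorph.image_frontier, frontier_closedBall _ one_ne_zero]
    exact Set.image_comp h e.toHomeomorph _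

/-- A graph on a linearly ordered vertex set is noncrossing if no two of its edges, viewed as
intervals, interlace. For vertices on a circle, cut open at one point, this says that chords
joining adjacent vertices do not cross. -/
def IsNoncrossing {V : Type*} [LinearOrder V] (G : SimpleGraph V) : Prop :=
  ∀ ⦃a b c d⦄, a < b → b < c → c < d → G.Adj a c → ¬ G.Adj b d

namespace PlaneEmbedding

variable {V : Type*} {G : SimpleGraph V} (emb : PlaneEmbedding G)

/-- The closed arc representing an edge, as a set of points of the plane. -/
def closedArc (e : G.edgeSet) : Set (ℝ × ℝ) :=
  emb.arc e '' Set.Icc 0 1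

lemma mem_closedArc {e : G.edgeSet} {x : ℝ × ℝ} (hx : x ∈ emb.closedArc e) :
    x ∈ emb.arc e '' Set.Ioo 0 1 ∨ ∃ v ∈ (e : Sym2 V), x = emb.pos v := by
  obtain ⟨t, ⟨ht0, ht1⟩, rfl⟩ := hx
  obtain ⟨u, v, he, h0, h1⟩ := emb.arc_ends e
  rw [he]
  rcases ht0.eq_or_lt with rfl | ht0
  · exact .inr ⟨u, Sym2.mem_mk_left u v, h0⟩
  rcases ht1.eq_or_lt with rfl | ht1
  · exact .inr ⟨v, Sym2.mem_mk_right u v, h1⟩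
  · exact .inl ⟨t, ⟨ht0, ht1⟩, rfl⟩

lemma disjoint_closedArc {e f : G.edgeSet} (hef : ∀ v ∈ (e : Sym2 V), v ∉ (f : Sym2 V)) :
    Disjoint (emb.closedArc e) (emb.closedArc f) := by
  have hne : e ≠ f := by
    rintro rfl
    exact hef _ (Sym2.out_fst_mem _) (Sym2.out_fst_mem _)
  refine Set.disjoint_left.2 fun x hxe hxf => ?_
  rcases emb.mem_closedArc hxe with ⟨s, hs, rfl⟩ | ⟨v, hv, rfl⟩ <;>
    rcases emb.mem_closedArc hxf with ⟨t, ht, h⟩ | ⟨w, hw, h⟩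
  · exact emb.arc_disjoint e f hne s hs t ht h.symm
  · exact emb.arc_avoid e s hs ⟨w, h.symm⟩
  · exact emb.arc_avoid f t ht ⟨v, h.symm⟩
  · exact hef v hv (emb.inj h ▸ hw)

lemma exists_curve_mapsTo_closedArc {u v : V} (huv : G.Adj u v) :
    ∃ p : ℝ → ℝ × ℝ, ContinuousOn p (Set.Icc 0 1) ∧ p 0 = emb.pos u ∧ p 1 = emb.pos v ∧
      Set.MapsTo p (Set.Icc 0 1) (emb.closedArc ⟨s(u, v), huv⟩) := by
  obtain ⟨x, y, hxy, h0, h1⟩ := emb.arc_ends ⟨s(u, v), huv⟩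
  rcases Sym2.eq_iff.1 hxy with ⟨rfl, rfl⟩ | ⟨rfl, rfl⟩
  · exact ⟨_, emb.arc_cont _, h0, h1, Set.mapsTo_image _ _⟩
  · have hsymm : Set.MapsTo (fun t : ℝ => 1 - t) (Set.Icc 0 1) (Set.Icc 0 1) := fun t ht =>
      ⟨sub_nonneg.2 ht.2, sub_le_self 1 ht.1⟩
    exact ⟨fun t => emb.arc _ (1 - t), (emb.arc_cont _).comp (by fun_prop) hsymm, by simpa using h1,
      by simpa using h0, (Set.mapsTo_image _ _).comp hsymm⟩

end PlaneEmbedding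

-- The unit disk of `ℝ × ℝ` is a square for the sup norm; a homeomorphism onto the round disk of
-- `ℂ` makes arguments of complex numbers available as coordinates on its boundary.
lemma exists_linearOrder_isNoncrossing {V : Type*} {G : SimpleGraph V} (hG : G.IsOuterplanar) :
    ∃ _ : LinearOrder V, IsNoncrossing G := by
  obtain ⟨emb, hpos, harc⟩ := hG
  obtain ⟨h, hball, hsphere⟩ :=
    exists_homeomorph_image_closedBall_image_sphere Complex.equivRealProdCLM.symm
  let θ : V → ℝ := fun v => (h (emb.pos v)).arg
  have hθ : ∀ v, h (emb.pos v) = Complex.exp (θ v * Complex.I) := fun v => by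
    have hnorm : h (emb.pos v) ∈ Metric.sphere 0 1 :=
      hsphere ▸ Set.mem_image_of_mem h (mem_sphere_zero_iff_norm.2 (hpos v))
    simpa [mem_sphere_zero_iff_norm.1 hnorm] using
      (Complex.norm_mul_exp_arg_mul_I (h (emb.pos v))).symm
  have hθ_inj : Function.Injective θ := fun u v huv =>
    emb.inj (h.injective (by rw [hθ u, hθ v, huv]))
  have hmem : ∀ e, Set.MapsTo h (emb.closedArc e) (Metric.closedBall 0 1) := by
    rintro e _ ⟨t, ht, rfl⟩
    exact hball ▸ Set.mem_image_of_mem h (mem_closedBall_zero_iff.2 (harc e t ht))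
  let _ : LinearOrder V := LinearOrder.lift' θ hθ_inj
  refine ⟨inferInstance, fun a b c d hab hbc hcd hac hbd => ?_⟩
  obtain ⟨p, hp, hp0, hp1, hp_mem⟩ := emb.exists_curve_mapsTo_closedArc hac
  obtain ⟨q, hq, hq0, hq1, hq_mem⟩ := emb.exists_curve_mapsTo_closedArc hbd
  have hda : θ d < θ a + 2 * Real.pi := by
    linarith [Complex.arg_le_pi (h (emb.pos d)), Complex.neg_pi_lt_arg (h (emb.pos a))]
  obtain ⟨s, hs, t, ht, hst⟩ := exists_eq_of_interlacing
    (h.continuous.comp_continuousOn hp) (h.continuous.comp_continuousOn hq)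
    ((hmem _).comp hp_mem) ((hmem _).comp hq_mem)
    ((congrArg h hp0).trans (hθ a)) ((congrArg h hq0).trans (hθ b))
    ((congrArg h hp1).trans (hθ c)) ((congrArg h hq1).trans (hθ d)) hab hbc hcd hda
  have hdisj : ∀ v ∈ s(a, c), v ∉ s(b, d) := by
    simp only [Sym2.mem_iff]
    rintro v (rfl | rfl) (rfl | rfl)
    exacts [hab.false, (hab.trans (hbc.trans hcd)).false, hbc.false, hcd.false]
  exact Set.disjoint_left.1 (emb.disjoint_closedArc hdisj) (hp_mem hs)
    (h.injective hst ▸ hq_mem ht)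

section Reducible

variable {V W : Type*} {G : SimpleGraph V}

/-- A configuration that can be removed when colouring greedily: every neighbour of `u` is `v` or
`w`, and if `u` is adjacent to `v`, then the neighbours of `v` other than `u` and `w` form a
clique. There may be fewer than two neighbours, so that `v` and `w` need not be adjacent to `u`. -/
def IsReducible (G : SimpleGraph V) (u v w : V) : Prop :=
  G.neighborSet u ⊆ {v, w} ∧ (G.Adj u v → G.IsClique (G.neighborSet v \ {u, w}))

lemma IsReducible.comap {f : W → V} (hf : Function.Injective f) {u v w : W}
    (h : IsReducible G (f u) (f v) (f w)) : IsReducible (G.comap f) u v w := by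
  refine ⟨fun x hx => ?_, fun huv x hx y hy hxy => ?_⟩
  · simpa [hf.eq_iff] using h.1 hx
  · refine h.2 huv ⟨hx.1, ?_⟩ ⟨hy.1, ?_⟩ (hf.ne hxy)
    · simpa [hf.eq_iff] using hx.2
    · simpa [hf.eq_iff] using hy.2

lemma IsReducible.of_comap {f : W → V} (hf : G.support ⊆ Set.range f) {u v w : W}
    (h : IsReducible (G.comap f) u v w) : IsReducible G (f u) (f v) (f w) := by
  have hrange : ∀ {x y}, G.Adj x y → ∃ z, f z = y := fun hxy => hf ⟨_, hxy.symm⟩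
  refine ⟨fun x hx => ?_, fun huv x hx y hy hxy => ?_⟩
  · obtain ⟨x, rfl⟩ := hrange hx
    exact (h.1 hx).imp (congrArg f) (congrArg f)
  · obtain ⟨x, rfl⟩ := hrange hx.1
    obtain ⟨y, rfl⟩ := hrange hy.1
    refine h.2 huv ⟨hx.1, fun hx' => hx.2 ?_⟩ ⟨hy.1, fun hy' => hy.2 ?_⟩ (ne_of_apply_ne f hxy)
    · exact hx'.imp (congrArg f) (congrArg f)
    · exact hy'.imp (congrArg f) (congrArg f)

end Reducible

namespace IsNoncrossing

variable {V W : Type*} [LinearOrder V] [LinearOrder W] {G H : SimpleGraph V}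

lemma mono (hH : IsNoncrossing H) (hGH : G ≤ H) : IsNoncrossing G :=
  fun _ _ _ _ hab hbc hcd hac hbd => hH hab hbc hcd (hGH hac) (hGH hbd)

lemma comap (hG : IsNoncrossing G) {f : W → V} (hf : StrictMono f) :
    IsNoncrossing (G.comap f) :=
  fun _ _ _ _ hab hbc hcd => hG (hf hab) (hf hbc) (hf hcd)

lemma map (hG : IsNoncrossing G) {f : V → W} (hf : StrictMono f) : IsNoncrossing (G.map f) := by
  rintro _ _ _ _ hab hbc hcd ⟨-, a, c, hac, rfl, rfl⟩ ⟨-, b, d, hbd, rfl, rfl⟩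
  exact hG (hf.lt_iff_lt.1 hab) (hf.lt_iff_lt.1 hbc) (hf.lt_iff_lt.1 hcd) hac hbd

lemma mem_Icc_of_adj (hG : IsNoncrossing G) {a b i j : V} (hab : G.Adj a b)
    (hi : i ∈ Set.Ioo a b) (hij : G.Adj i j) : j ∈ Set.Icc a b := by
  by_contra! hj
  rcases lt_or_ge j a with hja | haj
  · exact hG hja hi.1 hi.2 hij.symm hab
  · exact hG hi.1 hi.2 (not_le.1 fun hjb => hj ⟨haj, hjb⟩) hab hij

end IsNoncrossing

section ShortEdges

variable {H : SimpleGraph ℕ} {a b n : ℕ}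

/-- Every edge with an endpoint strictly between `a` and `b` stays within `[a, b]` and joins
integers at distance at most two. -/
def HasShortEdges (H : SimpleGraph ℕ) (a b : ℕ) : Prop :=
  ∀ ⦃i j⦄, i ∈ Set.Ioo a b → H.Adj i j → j ∈ Set.Icc a b ∧ j ≤ i + 2 ∧ i ≤ j + 2

-- A shortest interval with at least two interior points that no edge leaves from its interior will
-- do: an edge joining two of its points at distance at least three bounds a shorter such interval.
lemma IsNoncrossing.exists_hasShortEdges (hH : IsNoncrossing H) (hn : 3 < n)
    (hsupp : H.support ⊆ Set.Iio n) : ∃ a b, a + 3 ≤ b ∧ b < n ∧ HasShortEdges H a b := by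
  classical
  let P : ℕ → Prop := fun l => 3 ≤ l ∧ ∃ a, a + l < n ∧
    ∀ i j, i ∈ Set.Ioo a (a + l) → H.Adj i j → j ∈ Set.Icc a (a + l)
  have hP : ∃ l, P l := by
    refine ⟨n - 1, by lia, 0, by lia, fun i j _ hij => ?_⟩
    have hjn : j < n := hsupp ⟨i, hij.symm⟩
    exact ⟨by lia, by lia⟩
  obtain ⟨hl, a, hal, hclosed⟩ := Nat.find_spec hP
  have hspan : ∀ {x y}, y ≤ a + Nat.find hP → y - x < Nat.find hP → H.Adj x y → y ≤ x + 2 := by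
    intro x y hyb hlt hxy
    by_contra! hfar
    refine Nat.find_min hP hlt ⟨by lia, x, by lia, fun i j hi hij => ?_⟩
    rw [show x + (y - x) = y by lia] at hi ⊢
    exact hH.mem_Icc_of_adj hxy hi hij
  refine ⟨a, a + Nat.find hP, by lia, hal, fun i j hi hij => ?_⟩
  have hj := hclosed i j hi hij
  simp only [Set.mem_Ioo, Set.mem_Icc] at hi hj
  exact ⟨hj, hspan (by lia) (by lia) hij, hspan (by lia) (by lia) hij.symm⟩

lemma HasShortEdges.isReducible_of_adj (h : HasShortEdges H a b) (hH : IsNoncrossing H)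
    (hab : a + 3 ≤ b) (h13 : H.Adj (a + 1) (a + 3)) :
    IsReducible H (a + 2) (a + 1) (a + 3) := by
  refine ⟨fun x hx => ?_, fun _ => Set.Subsingleton.pairwise ?_ _⟩
  · have hIcc := hH.mem_Icc_of_adj h13 ⟨by lia, by lia⟩ hx
    have hne := H.ne_of_adj hx
    simp only [Set.mem_Icc, Set.mem_insert_iff, Set.mem_singleton_iff] at hIcc ⊢
    lia
  · have hx : ∀ x ∈ H.neighborSet (a + 1) \ {a + 2, a + 3}, x = a := fun x ⟨hx, hxn⟩ => by
      have hshort := h ⟨by lia, by lia⟩ hx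
      have hne := H.ne_of_adj hx
      simp only [Set.mem_Icc, Set.mem_insert_iff, Set.mem_singleton_iff] at hshort hxn
      lia
    exact fun x hxm y hym => (hx x hxm).trans (hx y hym).symm

lemma IsNoncrossing.isReducible_of_adj_of_not_adj (hH : IsNoncrossing H)
    (h24 : H.Adj (a + 2) (a + 4)) (h34 : ¬ H.Adj (a + 3) (a + 4)) :
    IsReducible H (a + 3) (a + 3) (a + 2) := by
  refine ⟨fun x hx => ?_, fun hloop => absurd hloop (H.irrefl)⟩
  have hIcc := hH.mem_Icc_of_adj h24 ⟨by lia, by lia⟩ hx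
  have hx4 : x ≠ a + 4 := fun hx4 => h34 (hx4 ▸ hx)
  simp only [Set.mem_Icc, Set.mem_insert_iff, Set.mem_singleton_iff] at hIcc ⊢
  lia

lemma HasShortEdges.isReducible_of_not_adj (h : HasShortEdges H a b) (hab : a + 3 ≤ b)
    (h13 : ¬ H.Adj (a + 1) (a + 3)) (h34 : H.Adj (a + 2) (a + 4) → H.Adj (a + 3) (a + 4)) :
    IsReducible H (a + 1) (a + 2) a := by
  refine ⟨fun x hx => ?_, fun _ => ?_⟩
  · have hshort := h ⟨by lia, by lia⟩ hx
    have hne := H.ne_of_adj hx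
    have hx3 : x ≠ a + 3 := fun hx3 => h13 (hx3 ▸ hx)
    simp only [Set.mem_Icc, Set.mem_insert_iff, Set.mem_singleton_iff] at hshort ⊢
    lia
  · have hx : ∀ x ∈ H.neighborSet (a + 2) \ {a + 1, a}, x = a + 3 ∨ x = a + 4 :=
      fun x ⟨hx, hxn⟩ => by
        have hshort := h ⟨by lia, by lia⟩ hx
        have hne := H.ne_of_adj hx
        simp only [Set.mem_Icc, Set.mem_insert_iff, Set.mem_singleton_iff] at hshort hxn
        lia
    intro x hxm y hym hxy
    rcases hx x hxm with rfl | rfl <;> rcases hx y hym with rfl | rfl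
    exacts [absurd rfl hxy, h34 hym.1, (h34 hxm.1).symm, absurd rfl hxy]

lemma isReducible_zero_of_le_three (hn : n ≤ 3) (hsupp : H.support ⊆ Set.Iio n) :
    IsReducible H 0 (n - 1) (n - 2) := by
  have hlt : ∀ {x y}, H.Adj x y → y < n := fun hxy => hsupp ⟨_, hxy.symm⟩
  refine ⟨fun x hx => ?_, fun _ x ⟨hx, hxn⟩ => ?_⟩
  · have hxn := hlt hx
    have hne := H.ne_of_adj hx
    simp only [Set.mem_insert_iff, Set.mem_singleton_iff]
    lia
  · have hlt := hlt hx
    have hne := H.ne_of_adj hx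
    simp only [Set.mem_insert_iff, Set.mem_singleton_iff] at hxn
    lia

lemma IsNoncrossing.exists_isReducible_of_support_subset_Iio (hH : IsNoncrossing H) (hn : 0 < n)
    (hsupp : H.support ⊆ Set.Iio n) :
    ∃ u < n, ∃ v < n, ∃ w < n, IsReducible H u v w := by
  rcases le_or_gt n 3 with hn3 | hn3
  · exact ⟨0, hn, n - 1, by lia, n - 2, by lia, isReducible_zero_of_le_three hn3 hsupp⟩
  obtain ⟨a, b, hab, hbn, h⟩ := hH.exists_hasShortEdges hn3 hsupp
  by_cases h13 : H.Adj (a + 1) (a + 3)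
  · exact ⟨a + 2, by lia, a + 1, by lia, a + 3, by lia, h.isReducible_of_adj hH hab h13⟩
  by_cases h34 : H.Adj (a + 2) (a + 4) → H.Adj (a + 3) (a + 4)
  · exact ⟨a + 1, by lia, a + 2, by lia, a, by lia, h.isReducible_of_not_adj hab h13 h34⟩
  · obtain ⟨h24, h34⟩ := Classical.not_imp.1 h34
    exact ⟨a + 3, by lia, a + 3, by lia, a + 2, by lia, hH.isReducible_of_adj_of_not_adj h24 h34⟩

end ShortEdges

lemma IsNoncrossing.exists_isReducible {V : Type*} [LinearOrder V] {G : SimpleGraph V}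
    (hG : IsNoncrossing G) {S : Finset V} (hS : S.Nonempty) (hsupp : G.support ⊆ S) :
    ∃ u ∈ S, ∃ v w, IsReducible G u v w := by
  let e : Fin S.card ↪o V := S.orderEmbOfFin rfl
  let H : SimpleGraph ℕ := (G.comap e).map Fin.valEmbedding
  have hH : IsNoncrossing H := (hG.comap e.strictMono).map Fin.val_strictMono
  have hH_supp : H.support ⊆ Set.Iio S.card := by
    rintro _ ⟨_, -, i, j, -, rfl, -⟩
    exact i.2
  obtain ⟨u, hu, v, hv, w, hw, h⟩ :=
    hH.exists_isReducible_of_support_subset_Iio hS.card_pos hH_supp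
  have hcomap : IsReducible (G.comap e) ⟨u, hu⟩ ⟨v, hv⟩ ⟨w, hw⟩ := by
    rw [← comap_map_eq Fin.valEmbedding (G.comap e)]
    exact IsReducible.comap Fin.val_injective h
  exact ⟨e ⟨u, hu⟩, S.orderEmbOfFin_mem rfl _, e ⟨v, hv⟩, e ⟨w, hw⟩,
    hcomap.of_comap (by rwa [Finset.range_orderEmbOfFin])⟩

section FrugalColoring

variable {V α : Type*} {G : SimpleGraph V} {k D : ℕ} {c : V → α}

/-- `G` has a `k`-frugal colouring from any assignment of lists of `t` elements of `α` to its
vertices, so that the `k`-frugal choice number is the least such `t` for `α = ℤ`. -/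
def IsFrugallyChoosable (α : Type*) (G : SimpleGraph V) (k t : ℕ) : Prop :=
  ∀ L : V → Finset α, (∀ v, (L v).card = t) →
    ∃ c : V → α, (∀ v, c v ∈ L v) ∧ G.IsFrugalColoring k c

lemma isFrugalColoring_update [DecidableEq V] {u : V} {b : α}
    (hc : (G.deleteIncidenceSet u).IsFrugalColoring k c) (hu : (G.neighborSet u).encard ≤ k)
    (hb : ∀ x, G.Adj u x → c x ≠ b)
    (hlt : ∀ y, G.Adj u y → {x | x ∈ (G.deleteIncidenceSet u).neighborSet y ∧ c x = b}.ncard < k) :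
    G.IsFrugalColoring k (Function.update c u b) := by
  refine ⟨fun x y hxy => ?_, fun y a => ?_⟩
  · rcases eq_or_ne x u with rfl | hx
    · simpa [hxy.ne'] using (hb y hxy).symm
    rcases eq_or_ne y u with rfl | hy
    · simpa [hx] using hb x hxy.symm
    · simpa [hx, hy] using hc.1 x y (deleteIncidenceSet_adj.2 ⟨hxy, hx, hy⟩)
  rcases eq_or_ne y u with rfl | hy
  · have hle : {x | x ∈ G.neighborSet y ∧ Function.update c y b x = a}.encard ≤ k :=
      (Set.encard_le_encard (Set.sep_subset _ _)).trans hu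
    exact (Set.encard_le_coe_iff_finite_ncard_le.1 hle).2
  by_cases huy : G.Adj u y ∧ b = a
  · obtain ⟨huy, rfl⟩ := huy
    have hinsert : {x | x ∈ G.neighborSet y ∧ Function.update c u b x = b} =
        insert u {x | x ∈ (G.deleteIncidenceSet u).neighborSet y ∧ c x = b} := by
      ext x
      rcases eq_or_ne x u with rfl | hx
      · simp [huy.symm]
      · simp [deleteIncidenceSet_adj, hx, hy]
    rw [hinsert]
    exact (Set.ncard_insert_le _ _).trans (hlt y huy)
  · have heq : {x | x ∈ G.neighborSet y ∧ Function.update c u b x = a} =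
        {x | x ∈ (G.deleteIncidenceSet u).neighborSet y ∧ c x = a} := by
      ext x
      rcases eq_or_ne x u with rfl | hx
      · simpa [deleteIncidenceSet_adj, G.adj_comm y] using huy
      · simp [deleteIncidenceSet_adj, hx, hy]
    exact heq ▸ hc.2 y a

lemma exists_notMem_ncard_fiber_lt {T : Set V} (hT : T.Finite) (c : V → α) (hk : 0 < k)
    {F L : Finset α} (hcard : F.card + T.ncard / k < L.card) :
    ∃ b ∈ L, b ∉ F ∧ {x | x ∈ T ∧ c x = b}.ncard < k := by
  classical
  lift T to Finset V using hT
  rw [Set.ncard_coe_finset] at hcard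
  have hlt : T.card < (L \ F).card * k := by
    have := Finset.le_card_sdiff F L
    exact (Nat.div_lt_iff_lt_mul hk).1 (by lia)
  obtain ⟨b, hb, hbk⟩ := Finset.exists_card_fiber_lt_of_card_lt_mul (f := c) hlt
  obtain ⟨hbL, hbF⟩ := Finset.mem_sdiff.1 hb
  refine ⟨b, hbL, hbF, ?_⟩
  rwa [← Set.ncard_coe_finset, Finset.coe_filter] at hbk

lemma encard_neighborSet_deleteIncidenceSet_le {u w : V} (huw : G.Adj u w)
    (hD : (G.neighborSet w).encard ≤ D) :
    ((G.deleteIncidenceSet u).neighborSet w).encard ≤ (D - 1 : ℕ) := by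
  have heq : (G.deleteIncidenceSet u).neighborSet w = G.neighborSet w \ {u} := by
    ext x
    simp [deleteIncidenceSet_adj, huw.ne']
  rw [heq, Set.encard_sdiff_singleton_of_mem ((G.mem_neighborSet w u).2 huw.symm), ENat.natCast_sub]
  exact tsub_le_tsub_right hD 1

namespace IsReducible

variable {u v w : V}

lemma ncard_fiber_le_one (h : IsReducible G u v w) (huv : G.Adj u v)
    (hc : ∀ x y, (G.deleteIncidenceSet u).Adj x y → c x ≠ c y) {b : α} (hbw : b ≠ c w) :
    {x | x ∈ (G.deleteIncidenceSet u).neighborSet v ∧ c x = b}.ncard ≤ 1 := by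
  have hmem : ∀ {x}, (G.deleteIncidenceSet u).Adj v x → c x = b →
      x ≠ u ∧ x ∈ G.neighborSet v \ {u, w} := by
    rintro x hvx rfl
    obtain ⟨hvx, -, hxu⟩ := deleteIncidenceSet_adj.1 hvx
    exact ⟨hxu, hvx, not_or.2 ⟨hxu, ne_of_apply_ne c hbw⟩⟩
  refine (Set.encard_le_coe_iff_finite_ncard_le.1 (Set.encard_le_one_iff_subsingleton.2 ?_)).2
  rintro x ⟨hvx, hx⟩ y ⟨hvy, hy⟩
  obtain ⟨hxu, hx_mem⟩ := hmem hvx hx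
  obtain ⟨hyu, hy_mem⟩ := hmem hvy hy
  by_contra hxy
  exact hc x y (deleteIncidenceSet_adj.2 ⟨h.2 huv hx_mem hy_mem hxy, hxu, hyu⟩) (hx.trans hy.symm)

lemma exists_isFrugalColoring_update [DecidableEq V] (h : IsReducible G u v w) (hk : 2 ≤ k)
    (hD : (G.neighborSet w).encard ≤ D) {L : Finset α} (hL : (D - 1) / k + 3 ≤ L.card)
    (hc : (G.deleteIncidenceSet u).IsFrugalColoring k c) :
    ∃ b ∈ L, G.IsFrugalColoring k (Function.update c u b) := by
  classical
  have hF : ({c v, c w} : Finset α).card ≤ 2 := Finset.card_le_two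
  obtain ⟨b, hbL, hbF, hbw⟩ : ∃ b ∈ L, b ∉ ({c v, c w} : Finset α) ∧ (G.Adj u w →
      {x | x ∈ (G.deleteIncidenceSet u).neighborSet w ∧ c x = b}.ncard < k) := by
    by_cases huw : G.Adj u w
    · obtain ⟨hfin, hcard⟩ := Set.encard_le_coe_iff_finite_ncard_le.1
        (encard_neighborSet_deleteIncidenceSet_le huw hD)
      have := Nat.div_le_div_right (c := k) hcard
      have hlt : ({c v, c w} : Finset α).card +
          ((G.deleteIncidenceSet u).neighborSet w).ncard / k < L.card := by lia
      obtain ⟨b, hbL, hbF, hb⟩ := exists_notMem_ncard_fiber_lt hfin c (by lia) hlt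
      exact ⟨b, hbL, hbF, fun _ => hb⟩
    · have hlt : ({c v, c w} : Finset α).card < L.card := by lia
      obtain ⟨b, hbL, hbF⟩ := Finset.exists_mem_notMem_of_card_lt_card hlt
      exact ⟨b, hbL, hbF, fun huw' => absurd huw' huw⟩
  simp only [Finset.mem_insert, Finset.mem_singleton, not_or, ← ne_eq] at hbF
  have hu : (G.neighborSet u).encard ≤ k := calc
    (G.neighborSet u).encard ≤ ({v, w} : Set V).encard := Set.encard_le_encard h.1
    _ ≤ 2 := by simpa [one_add_one_eq_two] using Set.encard_insert_le {w} v
    _ ≤ k := by exact_mod_cast hk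
  refine ⟨b, hbL, isFrugalColoring_update hc hu (fun x hx => ?_) fun y huy => ?_⟩
  · rcases h.1 hx with rfl | rfl
    exacts [hbF.1.symm, hbF.2.symm]
  · rcases h.1 huy with rfl | rfl
    exacts [(h.ncard_fiber_le_one huy hc.1 hbF.2).trans_lt hk, hbw huy]

end IsReducible

lemma IsNoncrossing.exists_isFrugalColoring_of_support_subset [LinearOrder V] (hk : 2 ≤ k)
    {L : V → Finset α} (hL : ∀ v, (D - 1) / k + 3 ≤ (L v).card) (S : Finset V)
    (hG : IsNoncrossing G) (hD : ∀ v, (G.neighborSet v).encard ≤ D) (hS : G.support ⊆ S) :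
    ∃ c : V → α, (∀ v, c v ∈ L v) ∧ G.IsFrugalColoring k c := by
  induction S using Finset.strongInduction generalizing G with
  | H S ih =>
  rcases S.eq_empty_or_nonempty with rfl | hS_ne
  · have hG_bot : G = ⊥ := (support_eq_bot_iff G).1 (by simpa using hS)
    have hL_ne : ∀ v, (L v).Nonempty := fun v => Finset.card_pos.1 (by have := hL v; lia)
    choose c hc using hL_ne
    exact ⟨c, hc, by simp [IsFrugalColoring, hG_bot]⟩
  obtain ⟨u, hu, v, w, h⟩ := hG.exists_isReducible hS_ne hS
  have hle : G.deleteIncidenceSet u ≤ G := deleteIncidenceSet_le G u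
  obtain ⟨c, hcL, hc⟩ := ih (S.erase u) (Finset.erase_ssubset hu) (hG.mono hle)
    (fun x => (Set.encard_le_encard fun _ hy => hle hy).trans (hD x))
    (fun x hx => by
      obtain ⟨y, hxy⟩ := hx
      obtain ⟨hxy, hxu, -⟩ := deleteIncidenceSet_adj.1 hxy
      exact Finset.mem_erase.2 ⟨hxu, hS ⟨y, hxy⟩⟩)
  obtain ⟨b, hb, hcb⟩ := h.exists_isFrugalColoring_update hk (hD w) (hL u) hc
  refine ⟨_, fun x => ?_, hcb⟩
  rcases eq_or_ne x u with rfl | hx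
  · simpa using hb
  · simpa [hx] using hcL x

lemma exists_isFrugalColoring_of_forall_finset (hfin : ∀ v, (G.neighborSet v).Finite)
    {L : V → Finset α} (h : ∀ S : Finset V, ∃ c : V → α,
      (∀ v, c v ∈ L v) ∧ (G.induce (S : Set V)).spanningCoe.IsFrugalColoring k c) :
    ∃ c : V → α, (∀ v, c v ∈ L v) ∧ G.IsFrugalColoring k c := by
  classical
  choose g hgL hg using h
  obtain ⟨c, hc⟩ := Finset.rado_selection (β := fun v => L v) fun S v => ⟨g S v, hgL S v⟩
  have hc' : ∀ S : Finset V, ∃ T, S ⊆ T ∧ ∀ v ∈ S, (c v : α) = g T v := fun S =>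
    (hc S).imp fun T hT => ⟨hT.1, fun v hv => congrArg Subtype.val (hT.2 v hv)⟩
  refine ⟨fun v => c v, fun v => (c v).2, fun u v huv => ?_, fun v a => ?_⟩
  · obtain ⟨T, hT, heq⟩ := hc' {u, v}
    change (c u : α) ≠ c v
    rw [heq u (by simp), heq v (by simp)]
    exact (hg T).1 u v (by simp_all [Finset.insert_subset_iff])
  · let S := insert v (hfin v).toFinset
    obtain ⟨T, hT, heq⟩ := hc' S
    have hset : {u | u ∈ G.neighborSet v ∧ (c u : α) = a} =
        {u | u ∈ (G.induce (T : Set V)).spanningCoe.neighborSet v ∧ g T u = a} := by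
      ext u
      have hu : G.Adj v u → u ∈ S := fun huv => by simp [S, huv]
      by_cases huv : G.Adj v u
      · simp [huv, heq u (hu huv), hT (hu huv), hT (Finset.mem_insert_self _ _)]
      · simp [huv]
    exact hset ▸ (hg T).2 v a

lemma IsNoncrossing.isFrugallyChoosable [LinearOrder V] (hG : IsNoncrossing G) (hk : 2 ≤ k)
    (hD : ∀ v, (G.neighborSet v).encard ≤ D) :
    IsFrugallyChoosable α G k ((D - 1) / k + 3) := by
  intro L hL
  refine exists_isFrugalColoring_of_forall_finset
    (fun v => (Set.encard_le_coe_iff_finite_ncard_le.1 (hD v)).1) fun S => ?_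
  have hle : (G.induce (S : Set V)).spanningCoe ≤ G := spanningCoe_induce_le G S
  refine IsNoncrossing.exists_isFrugalColoring_of_support_subset hk (fun v => (hL v).ge) S
    (hG.mono hle) (fun v => (Set.encard_le_encard fun _ hx => hle hx).trans (hD v)) ?_
  rintro x ⟨y, hxy⟩
  simp_all

lemma frugalChromaticNumber_le_frugalChoiceNumber {t : ℕ} (h : IsFrugallyChoosable ℤ G k t) :
    G.frugalChromaticNumber k ≤ G.frugalChoiceNumber k := by
  have hmem : IsFrugallyChoosable ℤ G k (G.frugalChoiceNumber k) :=
    Nat.sInf_mem (s := {t | IsFrugallyChoosable ℤ G k t}) ⟨t, h⟩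
  obtain ⟨c, hc, hproper, hfrugal⟩ :=
    hmem (fun _ => Finset.Ico 0 (G.frugalChoiceNumber k : ℤ)) (by simp)
  lift c to V → ℕ using fun v => (Finset.mem_Ico.1 (hc v)).1
  exact Nat.sInf_le ⟨c, by simpa using hc, by simpa using hproper,
    fun v a => by simpa using hfrugal v a⟩

end FrugalColoring

theorem frugal_outerplanar_general {k D : ℕ} (hk : 2 ≤ k) {V : Type*} {G : SimpleGraph V}
    [G.LocallyFinite] (hG : G.IsOuterplanar) (hD : ∀ v, G.degree v ≤ D) :
    G.frugalChromaticNumber k ≤ G.frugalChoiceNumber k ∧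
      G.frugalChoiceNumber k ≤ (D - 1) / k + 3 := by
  obtain ⟨_, hG⟩ := exists_linearOrder_isNoncrossing hG
  have hD' : ∀ v, (G.neighborSet v).encard ≤ D := fun v => by
    rw [← coe_neighborFinset, Set.encard_coe_eq_coe_finsetCard]
    exact_mod_cast hD v
  have hchoose : IsFrugallyChoosable ℤ G k ((D - 1) / k + 3) := hG.isFrugallyChoosable hk hD'
  exact ⟨frugalChromaticNumber_le_frugalChoiceNumber hchoose, Nat.sInf_le hchoose⟩

/-- For any `k ≥ 2` and outerplanar graph `G` with `Δ(G) ≥ 3`,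
`χ_k(G) ≤ ch_k(G) ≤ ⌊(Δ(G) - 1)/k⌋ + 3`. -/
theorem frugal_outerplanar (k : ℕ) (hk : 2 ≤ k) {V : Type*} [Fintype V]
    (G : SimpleGraph V) [DecidableRel G.Adj] (hG : G.IsOuterplanar)
    (hΔ : 3 ≤ G.maxDegree) :
    G.frugalChromaticNumber k ≤ G.frugalChoiceNumber k ∧
    G.frugalChoiceNumber k ≤ (G.maxDegree - 1) / k + 3 :=
  frugal_outerplanar_general hk hG G.degree_le_maxDegree
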